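/- Suppose g ⊆ ω with g ∉ SSy(N), F : N^k → N is a function definable in N (with parameters), and p is a condition in the poset P. Then there exists a condition q ≤ p with n_q = n_p such that every tuple (σ₁, …, σ_k) ∈ (2^{n_q})^k corresponds to some i < ω with q ⊢ g(i) ≠ (F(x_{σ₁}, …, x_{σ_k}))_i, where (y)_i denotes the i-th binary digit of y. -/

import Mathlib

open FirstOrder FirstOrder.Language

/-- Function symbols of the language of arithmetic: `0`, `1`, `+`, `·`. -/
inductive arithFunc : ℕ → Type
  | zero : arithFunc 0
  | one : arithFunc 0
  | add : arithFunc 2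
  | mul : arithFunc 2
  deriving DecidableEq

/-- Relation symbols of the language of arithmetic: `<`. -/
inductive arithRel : ℕ → Type
  | lt : arithRel 2
  deriving DecidableEq

/-- The first-order language of arithmetic `{0, 1, +, ·, <}`. -/
def arith : FirstOrder.Language := ⟨arithFunc, arithRel⟩

namespace Arith

variable {M : Type*} [arith.Structure M]

/-- The interpretation of `0`. -/
def zeroM (M : Type*) [arith.Structure M] : M :=
  Structure.funMap (L := arith) arithFunc.zero ![]

/-- The interpretation of `1`. -/
def oneM (M : Type*) [arith.Structure M] : M :=
  Structure.funMap (L := arith) arithFunc.one ![]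

/-- The interpretation of `+`. -/
def addM (x y : M) : M := Structure.funMap (L := arith) arithFunc.add ![x, y]

/-- The interpretation of `·`. -/
def mulM (x y : M) : M := Structure.funMap (L := arith) arithFunc.mul ![x, y]

/-- The interpretation of `<`. -/
def ltM (x y : M) : Prop := Structure.RelMap (L := arith) arithRel.lt ![x, y]

/-- Non-strict order. -/
def leM (x y : M) : Prop := ltM x y ∨ x = y

/-- The numeral `n` in `M`: `0`, or `1 + 1 + ⋯ + 1`. -/
def numeral (M : Type*) [arith.Structure M] : ℕ → M
  | 0 => zeroM M
  | n + 1 => addM (numeral M n) (oneM M)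

/-- The standard `arith`-structure on `ℕ`. -/
instance : arith.Structure ℕ where
  funMap {n} f v :=
    match f with
    | .zero => 0
    | .one => 1
    | .add => v 0 + v 1
    | .mul => v 0 * v 1
  RelMap {n} r v :=
    match r with
    | .lt => v 0 < v 1

/-- `M` is a model of Peano arithmetic: it satisfies the finitely many basic axioms of
`PA` together with induction for all parametrically definable sets (which is equivalent
to the usual first-order induction scheme). -/
def IsPAModel (M : Type*) [arith.Structure M] : Prop :=
  (∀ x : M, addM x (zeroM M) = x) ∧
  (∀ x y : M, addM x (addM y (oneM M)) = addM (addM x y) (oneM M)) ∧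
  (∀ x : M, mulM x (zeroM M) = zeroM M) ∧
  (∀ x y : M, mulM x (addM y (oneM M)) = addM (mulM x y) x) ∧
  (∀ x : M, ¬ ltM x (zeroM M)) ∧
  (∀ x y : M, ltM x (addM y (oneM M)) ↔ (ltM x y ∨ x = y)) ∧
  (∀ x : M, addM x (oneM M) ≠ zeroM M) ∧
  (∀ x y : M, addM x (oneM M) = addM y (oneM M) → x = y) ∧
  (∀ s : Set M, Set.Definable₁ (Set.univ : Set M) arith s →
    zeroM M ∈ s → (∀ x ∈ s, addM x (oneM M) ∈ s) → ∀ x : M, x ∈ s)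

/-- An element of `M` is standard if it is a numeral. -/
def IsStd (x : M) : Prop := ∃ n : ℕ, x = numeral M n

/-- `M` is a non-standard model of `PA`: a model of `PA` not isomorphic to the standard
model `ℕ`. -/
def NonstandardModel (M : Type*) [arith.Structure M] : Prop :=
  IsPAModel M ∧ ¬ Nonempty (M ≃[arith] ℕ)

/-- `(x)_i = 1`: the `i`-th binary digit of `x` is `1`, for standard `i`.  This is expressed
by saying that `x = u·2^(i+1) + (2^i + v)` with `v < 2^i`, where `2^i`, `2^(i+1)` are
numerals. -/
def digitB (x : M) (i : ℕ) : Prop :=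
  ∃ u v : M, x = addM (mulM u (numeral M (2 ^ (i + 1)))) (addM (numeral M (2 ^ i)) v) ∧
    ltM v (numeral M (2 ^ i))

/-- The standard system of `M`: the collection of subsets of `ℕ` coded by some
non-standard element of `M` (via its standard binary digits). -/
def SSy (M : Type*) [arith.Structure M] : Set (Set ℕ) :=
  {X | ∃ a : M, ¬ IsStd a ∧ ∀ i : ℕ, i ∈ X ↔ digitB a i}

/-- A function `M → M` is definable (with parameters) if its graph is a definable set. -/
def DefinableFun₁ (f : M → M) : Prop :=
  Set.Definable (Set.univ : Set M) arith {v : Fin 2 → M | f (v 0) = v 1}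

/-- A `k`-ary function `M^k → M` is definable (with parameters) if its graph is a
definable set. -/
def DefinableFun {k : ℕ} (F : (Fin k → M) → M) : Prop :=
  Set.Definable (Set.univ : Set M) arith
    {v : Fin (k + 1) → M | F (fun i => v i.castSucc) = v (Fin.last k)}

/-- `c` is the internal cardinality of the set `D ⊆ M`: there is an `M`-definable
bijection between `{x : x < c}` and `D`. -/
def InternalCard (D : Set M) (c : M) : Prop :=
  ∃ f : M → M, DefinableFun₁ f ∧ Set.BijOn f {x : M | ltM x c} D

/-- `y = 2^x` in the model `M`, expressed via the existence of a definable function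
satisfying the recursion of the base-`2` exponential up to `x`. -/
def IsPow2 (x y : M) : Prop :=
  ∃ f : M → M, DefinableFun₁ f ∧ f (zeroM M) = oneM M ∧
    (∀ z : M, ltM z x → f (addM z (oneM M)) = addM (f z) (f z)) ∧ f x = y

end Arith

namespace Arith

variable {N : Type*} [arith.Structure N]

/-- Formulas with constants for all elements of `N`, in free variables `x_σ` indexed by
binary sequences `σ ∈ 2^n`. -/
abbrev CFormula (N : Type*) [arith.Structure N] (n : ℕ) : Type _ :=
  (arith[[N]]).Formula (Fin n → Bool)

/-- `d^k` for standard `k`. -/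
def powStd (d : N) : ℕ → N
  | 0 => oneM N
  | k + 1 => mulM (powStd d k) d

/-- The binary sequence of length `n` coded by `j < 2^n`. -/
def binOfFin {n : ℕ} (j : Fin (2 ^ n)) : Fin n → Bool := fun i => j.val.testBit i.val

/-- The code `∑_σ b_σ · d^(rank σ)` of a tuple `(b_σ : σ ∈ 2^n)` of elements below `d`,
in base `d`. -/
def tupleCode (d : N) {n : ℕ} (b : (Fin n → Bool) → N) : N :=
  (List.finRange (2 ^ n)).foldr
    (fun j acc => addM (mulM (b (binOfFin j)) (powStd d j.val)) acc) (zeroM N)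

/-- `b` realizes all formulas in `fmls`. -/
def RealizesAll {n : ℕ} (fmls : Set (CFormula N n)) (b : (Fin n → Bool) → N) : Prop :=
  ∀ φ ∈ fmls, φ.Realize b

/-- The set of codes of tuples realizing `fmls` in `N`; this represents the internal set
`p(N)` of realizations of a condition. -/
def realizationCodes (d : N) {n : ℕ} (fmls : Set (CFormula N n)) : Set N :=
  {e | ∃ b : (Fin n → Bool) → N, RealizesAll fmls b ∧ e = tupleCode d b}

/-- A condition: a finite type `p` of `N` in the variables `(x_σ : σ ∈ 2^{n_p})`
(with parameters from `N`, and no quantifiers over any `x_σ`), such that `p ⊢ x_σ < d`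
(where `d = 2^a`), and such that for some positive rational `r = u/v`, internally in `N`,
`|p(N)| > r · d^(2^{n_p})`. -/
structure Condition (N : Type*) [arith.Structure N] (d : N) : Type _ where
  n : ℕ
  fmls : Set (CFormula N n)
  finite : fmls.Finite
  realizable : ∃ b : (Fin n → Bool) → N, RealizesAll fmls b
  bounded : ∀ b : (Fin n → Bool) → N, RealizesAll fmls b → ∀ σ : Fin n → Bool, ltM (b σ) d
  large : ∃ (u v : ℕ) (c : N), 0 < u ∧ 0 < v ∧
    InternalCard (realizationCodes d fmls) c ∧
    ltM (mulM (numeral N u) (powStd d (2 ^ n))) (mulM (numeral N v) c)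

/-- The `m`-reduct of a formula in the variables `(x_σ : σ ∈ 2^n)`: substitute
`x_{σ↾m}` for `x_σ`. -/
def reduct {n m : ℕ} (h : m ≤ n) (φ : CFormula N n) : CFormula N m :=
  φ.relabel fun σ => fun i => σ (Fin.castLE h i)

/-- The order on conditions: `q ≤ p` iff `n_q ≥ n_p` and `q` contains every
`n_q`-ramification of every formula in `p` (i.e. every formula whose `n_p`-reduct lies
in `p`). -/
def CondLE {d : N} (q p : Condition N d) : Prop :=
  ∃ h : p.n ≤ q.n, ∀ ψ : CFormula N q.n, reduct h ψ ∈ p.fmls → ψ ∈ q.fmls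

/-- Formulas in the variables `(x_f : f ∈ 2^ω)` with constants from `N`. -/
abbrev CFormulaInf (N : Type*) [arith.Structure N] : Type _ :=
  (arith[[N]]).Formula (ℕ → Bool)

/-- The `m`-reduct of a formula in the variables `(x_f : f ∈ 2^ω)`: substitute
`x_{f↾m}` for `x_f`. -/
def reductInf {m : ℕ} (φ : CFormulaInf N) : CFormula N m :=
  φ.relabel fun f => fun i => f i.val

end Arith

namespace Arith

section Definability

variable {M : Type*} [arith.Structure M] {α β : Type}

/-- A predicate on assignments is definable with parameters. -/
def Dp (P : (α → M) → Prop) : Prop := Set.Definable (Set.univ : Set M) arith {v | P v}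

/-- A function on assignments is definable with parameters: its graph is definable. -/
def Df (t : (α → M) → M) : Prop :=
  Dp fun w : Option α → M => t (fun i => w (some i)) = w none

theorem Dp.congr {P Q : (α → M) → Prop} (h : Dp P) (e : ∀ v, Q v ↔ P v) : Dp Q := by
  have : Q = P := funext fun v => propext (e v)
  rwa [this]

theorem Dp.and {P Q : (α → M) → Prop} (hP : Dp P) (hQ : Dp Q) : Dp fun v => P v ∧ Q v :=
  Set.Definable.inter hP hQ

theorem Dp.or {P Q : (α → M) → Prop} (hP : Dp P) (hQ : Dp Q) : Dp fun v => P v ∨ Q v :=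
  Set.Definable.union hP hQ

theorem Dp.not {P : (α → M) → Prop} (hP : Dp P) : Dp fun v => ¬ P v :=
  Set.Definable.compl hP

theorem Dp.imp {P Q : (α → M) → Prop} (hP : Dp P) (hQ : Dp Q) : Dp fun v => P v → Q v :=
  (hP.not.or hQ).congr fun v => by tauto

theorem Dp.iff {P Q : (α → M) → Prop} (hP : Dp P) (hQ : Dp Q) : Dp fun v => P v ↔ Q v :=
  ((hP.imp hQ).and (hQ.imp hP)).congr fun v => by tauto

theorem Dp.const (p : Prop) : Dp fun _ : α → M => p := by
  by_cases h : p
  · simp [Dp, h]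
  · simp [Dp, h]

theorem Dp.forall_finite {β : Type*} [Finite β] {P : β → (α → M) → Prop} (h : ∀ j, Dp (P j)) :
    Dp fun v => ∀ j, P j v := by
  have := Set.definable_iInter_of_finite h
  simpa [Dp, Set.iInter_ofPred] using this

theorem Dp.relabel {P : (α → M) → Prop} (h : Dp P) (f : α → β) :
    Dp fun v : β → M => P fun i => v (f i) :=
  Set.Definable.preimage_comp f h

theorem Dp.exBlock [Finite α] [Finite β] {P : (α → M) → (β → M) → Prop}
    (h : Dp fun w : α ⊕ β → M => P (fun i => w (Sum.inl i)) (fun j => w (Sum.inr j))) :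
    Dp fun v => ∃ y, P v y := by
  refine Dp.congr (Set.Definable.image_comp h Sum.inl) fun v => ?_
  constructor
  · rintro ⟨y, hy⟩
    exact ⟨Sum.elim v y, hy, rfl⟩
  · rintro ⟨w, hw, rfl⟩
    exact ⟨_, hw⟩

theorem Dp.ex [Finite α] {P : (α → M) → M → Prop}
    (h : Dp fun w : Option α → M => P (fun i => w (some i)) (w none)) :
    Dp fun v => ∃ x, P v x := by
  refine Dp.congr (Set.Definable.image_comp h some) fun v => ?_
  constructor
  · rintro ⟨y, hy⟩
    exact ⟨fun o => o.elim y v, hy, rfl⟩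
  · rintro ⟨w, hw, rfl⟩
    exact ⟨_, hw⟩

theorem Dp.all [Finite α] {P : (α → M) → M → Prop}
    (h : Dp fun w : Option α → M => P (fun i => w (some i)) (w none)) :
    Dp fun v => ∀ x, P v x :=
  (Dp.ex (P := fun v x => ¬ P v x) h.not).not.congr fun v => by simp

theorem dp_realize (φ : (arith[[M]]).Formula α) : Dp fun v : α → M => φ.Realize v := by
  let f : M → ↥(Set.univ : Set M) := fun m => ⟨m, trivial⟩
  have : (LHom.constantsOnMap f).IsExpansionOn M := constantsOnMap_isExpansionOn rfl
  have : (arith.lhomWithConstantsMap f).IsExpansionOn M := LHom.sumMap_isExpansionOn _ _ _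
  refine ⟨(arith.lhomWithConstantsMap f).onFormula φ, ?_⟩
  ext v
  exact (LHom.realize_onFormula _ φ).symm

theorem Dp.exists_formula {P : (α → M) → Prop} (h : Dp P) :
    ∃ φ : (arith[[M]]).Formula α, ∀ v, φ.Realize v ↔ P v := by
  obtain ⟨φ, hφ⟩ := h
  let f : ↥(Set.univ : Set M) → M := fun m => m
  have : (LHom.constantsOnMap f).IsExpansionOn M := constantsOnMap_isExpansionOn rfl
  have : (arith.lhomWithConstantsMap f).IsExpansionOn M := LHom.sumMap_isExpansionOn _ _ _
  refine ⟨(arith.lhomWithConstantsMap f).onFormula φ, fun v => ?_⟩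
  rw [LHom.realize_onFormula]
  exact (Set.ext_iff.1 hφ v).symm

theorem dp_eq_of_term (t s : (arith[[M]]).Term α) :
    Dp fun v : α → M => t.realize v = s.realize v :=
  (dp_realize (t.equal s)).congr fun v => by simp [Formula.realize_equal]

theorem Df.var (i : α) : Df fun v : α → M => v i :=
  dp_eq_of_term (.var (some i)) (.var none)

theorem Df.const (c : M) : Df fun _ : α → M => c :=
  (dp_eq_of_term ((arith.con c).term) (.var none)).congr fun v => by
    rw [Term.realize_constants]
    rfl

/-- A function symbol of arithmetic in the language with constants. -/
def arithSymbol (M : Type*) {n : ℕ} (f : arith.Functions n) : (arith[[M]]).Functions n :=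
  Sum.inl f

/-- A relation symbol of arithmetic in the language with constants. -/
def arithRelSymbol (M : Type*) {n : ℕ} (r : arith.Relations n) : (arith[[M]]).Relations n :=
  Sum.inl r

theorem dp_add_var (i j k : α) : Dp fun v : α → M => addM (v i) (v j) = v k :=
  (dp_eq_of_term (Functions.apply₂ (arithSymbol M (n := 2) arithFunc.add) (.var i) (.var j))
    (.var k)).congr fun v => by
      rw [Term.realize_functions_apply₂]
      rfl

theorem dp_mul_var (i j k : α) : Dp fun v : α → M => mulM (v i) (v j) = v k :=
  (dp_eq_of_term (Functions.apply₂ (arithSymbol M (n := 2) arithFunc.mul) (.var i) (.var j))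
    (.var k)).congr fun v => by
      rw [Term.realize_functions_apply₂]
      rfl

theorem dp_lt_var (i j : α) : Dp fun v : α → M => ltM (v i) (v j) :=
  (dp_realize (Relations.formula₂ (arithRelSymbol M (n := 2) arithRel.lt)
    (.var i) (.var j))).congr fun v => by
      rw [Formula.realize_rel₂]
      rfl

theorem Df.eq_var {t : (α → M) → M} (h : Df t) (e : α → β) (j : β) :
    Dp fun w : β → M => t (fun i => w (e i)) = w j :=
  Dp.relabel h fun o => o.elim j e

theorem Dp.comp [Finite α] [Finite β] {P : (β → M) → Prop} {t : β → (α → M) → M}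
    (h : Dp P) (ht : ∀ j, Df (t j)) : Dp fun v => P fun j => t j v := by
  have : Dp fun v => ∃ y : β → M, (∀ j, t j v = y j) ∧ P y :=
    Dp.exBlock ((Dp.forall_finite fun j => (ht j).eq_var _ _).and (h.relabel _))
  refine this.congr fun v => ⟨fun h => ⟨_, fun _ => rfl, h⟩, ?_⟩
  rintro ⟨y, hy, h⟩
  rwa [show (fun j => t j v) = y from funext hy]

theorem Df.relabel {t : (α → M) → M} (h : Df t) (f : α → β) :
    Df fun v : β → M => t fun i => v (f i) :=
  h.eq_var _ _

theorem Df.comp [Finite α] [Finite β] {T : (β → M) → M} {t : β → (α → M) → M}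
    (h : Df T) (ht : ∀ j, Df (t j)) : Df fun v => T fun j => t j v :=
  Dp.comp (t := fun (o : Option β) (w : Option α → M) =>
    o.elim (w none) fun j => t j fun i => w (some i)) h fun o => by
      cases o with
      | none => exact Df.var none
      | some j => exact (ht j).relabel _

theorem Dp.comp₂ [Finite α] {R : M → M → Prop} (h : Dp fun v : Fin 2 → M => R (v 0) (v 1))
    {s t : (α → M) → M} (hs : Df s) (ht : Df t) : Dp fun v => R (s v) (t v) :=
  Dp.comp (t := ![s, t]) h fun j => by fin_cases j <;> assumption

theorem Dp.comp₁ [Finite α] {R : M → Prop} (h : Dp fun v : Fin 1 → M => R (v 0))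
    {s : (α → M) → M} (hs : Df s) : Dp fun v => R (s v) :=
  Dp.comp (t := ![s]) h fun j => by fin_cases j; assumption

/-- A definable unary predicate. -/
def Ds (D : M → Prop) : Prop := Dp fun v : Fin 1 → M => D (v 0)

theorem Ds.comp {D : M → Prop} (hD : Ds D) [Finite α] {s : (α → M) → M} (hs : Df s) :
    Dp fun v => D (s v) :=
  Dp.comp₁ hD hs

theorem Dp.eq [Finite α] {s t : (α → M) → M} (hs : Df s) (ht : Df t) :
    Dp fun v => s v = t v :=
  Dp.comp₂ (R := fun x y => x = y) (dp_eq_of_term (.var 0) (.var 1)) hs ht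

theorem Dp.ltM [Finite α] {s t : (α → M) → M} (hs : Df s) (ht : Df t) :
    Dp fun v => ltM (s v) (t v) :=
  Dp.comp₂ (dp_lt_var 0 1) hs ht

theorem Df.addM [Finite α] {s t : (α → M) → M} (hs : Df s) (ht : Df t) :
    Df fun v => addM (s v) (t v) :=
  Df.comp (T := fun v : Fin 2 → M => Arith.addM (v 0) (v 1)) (t := ![s, t])
    (dp_add_var (some 0) (some 1) none) fun j => by fin_cases j <;> assumption

theorem Df.mulM [Finite α] {s t : (α → M) → M} (hs : Df s) (ht : Df t) :
    Df fun v => mulM (s v) (t v) :=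
  Df.comp (T := fun v : Fin 2 → M => Arith.mulM (v 0) (v 1)) (t := ![s, t])
    (dp_mul_var (some 0) (some 1) none) fun j => by fin_cases j <;> assumption

theorem Df.app [Finite α] {f : M → M} (hf : DefinableFun₁ f) {s : (α → M) → M} (hs : Df s) :
    Df fun v => f (s v) :=
  Df.comp (T := fun v : Fin 1 → M => f (v 0)) (t := ![s])
    (Dp.relabel (P := fun v : Fin 2 → M => f (v 0) = v 1) hf ![some 0, none])
    fun j => by fin_cases j; assumption

theorem DefinableFun.df {k : ℕ} {F : (Fin k → M) → M} (hF : DefinableFun F) : Df F :=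
  (Dp.relabel (P := fun v : Fin (k + 1) → M => F (fun i => v i.castSucc) = v (Fin.last k)) hF
    (Fin.lastCases none some)).congr fun v => by simp

theorem dp_iff {P : (α → M) → Prop} :
    Dp P ↔ Set.Definable (Set.univ : Set M) arith {v | P v} := Iff.rfl

theorem df_iff {t : (α → M) → M} :
    Df t ↔ Dp fun w : Option α → M => t (fun i => w (some i)) = w none := Iff.rfl

end Definability

attribute [irreducible] Dp Df

section Peano

variable {M : Type*} [arith.Structure M]

/-- Definability of formulas written in terms of `addM`, `mulM` and `ltM`. -/
theorem definable_raw {α : Type} {P : (α → M) → Prop}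
    (hP : Dp P := by
      repeat' first
      | with_reducible apply Dp.and
      | with_reducible apply Dp.or
      | with_reducible apply Dp.not
      | with_reducible apply Dp.iff
      | with_reducible apply Dp.ex
      | with_reducible apply Dp.all
      | with_reducible apply Dp.imp
      | with_reducible apply Dp.eq
      | with_reducible apply Dp.ltM
      | with_reducible apply Df.addM
      | with_reducible apply Df.mulM
      | with_reducible apply Df.var
      | with_reducible apply Df.const) : Dp P :=
  hP

variable [h : Fact (IsPAModel M)]

/-- Induction along a definable predicate. -/
theorem pa_induction {P : M → Prop} (hP : Dp fun v : Fin 1 → M => P (v 0)) (h0 : P (zeroM M))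
    (hs : ∀ x, P x → P (addM x (oneM M))) (x : M) : P x :=
  h.out.2.2.2.2.2.2.2.2 {x | P x} (dp_iff.1 hP) h0 hs x

theorem pa_add_zero (x : M) : addM x (zeroM M) = x := h.out.1 x

theorem pa_add_succ (x y : M) : addM x (addM y (oneM M)) = addM (addM x y) (oneM M) :=
  h.out.2.1 x y

theorem pa_mul_zero (x : M) : mulM x (zeroM M) = zeroM M := h.out.2.2.1 x

theorem pa_mul_succ (x y : M) : mulM x (addM y (oneM M)) = addM (mulM x y) x :=
  h.out.2.2.2.1 x y

theorem pa_not_lt_zero (x : M) : ¬ ltM x (zeroM M) := h.out.2.2.2.2.1 x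

theorem pa_lt_succ (x y : M) : ltM x (addM y (oneM M)) ↔ ltM x y ∨ x = y :=
  h.out.2.2.2.2.2.1 x y

theorem pa_succ_ne_zero (x : M) : addM x (oneM M) ≠ zeroM M := h.out.2.2.2.2.2.2.1 x

theorem pa_succ_inj {x y : M} (e : addM x (oneM M) = addM y (oneM M)) : x = y :=
  h.out.2.2.2.2.2.2.2.1 x y e

theorem pa_zero_add (x : M) : addM (zeroM M) x = x := by
  refine pa_induction (P := fun x => addM (zeroM M) x = x) definable_raw (pa_add_zero _) ?_ x
  intro x hx
  rw [pa_add_succ, hx]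

theorem pa_succ_add (x y : M) : addM (addM y (oneM M)) x = addM (addM y x) (oneM M) := by
  refine pa_induction (P := fun x => addM (addM y (oneM M)) x = addM (addM y x) (oneM M))
    definable_raw (by simp only [pa_add_zero]) ?_ x
  intro x hx
  rw [pa_add_succ, hx, pa_add_succ]

theorem pa_add_comm (x y : M) : addM x y = addM y x := by
  refine pa_induction (P := fun y => addM x y = addM y x)
    definable_raw (by simp only [pa_add_zero, pa_zero_add]) ?_ y
  intro y hy
  rw [pa_add_succ, hy, pa_succ_add]

theorem pa_add_assoc (x y z : M) : addM (addM x y) z = addM x (addM y z) := by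
  refine pa_induction (P := fun z => addM (addM x y) z = addM x (addM y z))
    definable_raw (by simp only [pa_add_zero]) ?_ z
  intro z hz
  rw [pa_add_succ, hz, pa_add_succ, pa_add_succ]

theorem pa_zero_mul (x : M) : mulM (zeroM M) x = zeroM M := by
  refine pa_induction (P := fun x => mulM (zeroM M) x = zeroM M)
    definable_raw (pa_mul_zero _) ?_ x
  intro x hx
  rw [pa_mul_succ, hx, pa_add_zero]

theorem pa_add_right_comm (x y z : M) : addM (addM x y) z = addM (addM x z) y := by
  rw [pa_add_assoc, pa_add_comm y, pa_add_assoc]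

theorem pa_succ_mul (x y : M) : mulM (addM y (oneM M)) x = addM (mulM y x) x := by
  refine pa_induction (P := fun x => mulM (addM y (oneM M)) x = addM (mulM y x) x)
    definable_raw (by simp only [pa_mul_zero, pa_add_zero]) ?_ x
  intro x hx
  rw [pa_mul_succ, hx, pa_add_succ, pa_mul_succ, pa_add_succ,
    pa_add_right_comm (mulM y x)]

theorem pa_mul_comm (x y : M) : mulM x y = mulM y x := by
  refine pa_induction (P := fun y => mulM x y = mulM y x)
    definable_raw (by simp only [pa_mul_zero, pa_zero_mul]) ?_ y
  intro y hy
  rw [pa_mul_succ, hy, pa_succ_mul]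

theorem pa_mul_add (x y z : M) : mulM x (addM y z) = addM (mulM x y) (mulM x z) := by
  refine pa_induction (P := fun z => mulM x (addM y z) = addM (mulM x y) (mulM x z))
    definable_raw (by simp only [pa_add_zero, pa_mul_zero]) ?_ z
  intro z hz
  rw [pa_add_succ, pa_mul_succ, hz, pa_mul_succ, pa_add_assoc]

theorem pa_mul_assoc (x y z : M) : mulM (mulM x y) z = mulM x (mulM y z) := by
  refine pa_induction (P := fun z => mulM (mulM x y) z = mulM x (mulM y z))
    definable_raw (by simp only [pa_mul_zero]) ?_ z
  intro z hz
  rw [pa_mul_succ, hz, pa_mul_succ, pa_mul_add]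

theorem pa_mul_one (x : M) : mulM x (oneM M) = x := by
  rw [← pa_zero_add (oneM M), pa_mul_succ, pa_mul_zero, pa_zero_add]

theorem pa_add_right_cancel {x y z : M} (e : addM x z = addM y z) : x = y := by
  refine pa_induction (P := fun z => addM x z = addM y z → x = y)
    definable_raw ?_ ?_ z e
  · simp only [pa_add_zero]
    exact id
  · intro z hz e
    rw [pa_add_succ, pa_add_succ] at e
    exact hz (pa_succ_inj e)

theorem pa_eq_zero_or_succ (x : M) : x = zeroM M ∨ ∃ y, x = addM y (oneM M) :=
  pa_induction (P := fun x => x = zeroM M ∨ ∃ y, x = addM y (oneM M)) definable_raw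
    (Or.inl rfl) (fun x _ => Or.inr ⟨x, rfl⟩) x

theorem pa_lt_iff {x y : M} : ltM x y ↔ ∃ z, y = addM x (addM z (oneM M)) := by
  refine pa_induction (P := fun y => ltM x y ↔ ∃ z, y = addM x (addM z (oneM M)))
    ?_ ?_ ?_ y
  · exact definable_raw
  · refine ⟨fun hx => (pa_not_lt_zero _ hx).elim, ?_⟩
    rintro ⟨z, hz⟩
    rw [pa_add_succ] at hz
    exact (pa_succ_ne_zero _ hz.symm).elim
  · intro y hy
    rw [pa_lt_succ, hy]
    constructor
    · rintro (⟨z, rfl⟩ | rfl)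
      · exact ⟨addM z (oneM M), by rw [pa_add_succ x (addM z (oneM M))]⟩
      · exact ⟨zeroM M, by rw [pa_zero_add]⟩
    · rintro ⟨z, hz⟩
      rw [pa_add_succ] at hz
      have hz := pa_succ_inj hz
      obtain rfl | ⟨w, rfl⟩ := pa_eq_zero_or_succ z
      · exact Or.inr (by rw [hz, pa_add_zero])
      · exact Or.inl ⟨w, hz⟩

theorem pa_le_iff {x y : M} : leM x y ↔ ∃ z, y = addM x z := by
  rw [leM, pa_lt_iff]
  constructor
  · rintro (⟨z, hz⟩ | rfl)
    · exact ⟨_, hz⟩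
    · exact ⟨zeroM M, (pa_add_zero x).symm⟩
  · rintro ⟨z, hz⟩
    obtain rfl | ⟨w, rfl⟩ := pa_eq_zero_or_succ z
    · exact Or.inr (by rw [hz, pa_add_zero])
    · exact Or.inl ⟨w, hz⟩

theorem pa_le_total (x y : M) : leM x y ∨ leM y x := by
  refine pa_induction (P := fun y => leM x y ∨ leM y x) ?_ ?_ ?_ y
  · simp only [leM]
    exact definable_raw
  · exact Or.inr (pa_le_iff.2 ⟨x, (pa_zero_add x).symm⟩)
  · intro y hy
    rcases hy with hy | hy | rfl
    · exact Or.inl (Or.inl ((pa_lt_succ _ _).2 hy))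
    · obtain ⟨z, rfl⟩ := pa_lt_iff.1 hy
      exact Or.inr (pa_le_iff.2 ⟨z, by rw [pa_add_succ, pa_succ_add]⟩)
    · exact Or.inl (Or.inl ((pa_lt_succ _ _).2 (Or.inr rfl)))

/-- A model of Peano arithmetic is a commutative semiring. -/
instance paCommSemiring : CommSemiring M where
  add := addM
  add_assoc := pa_add_assoc
  zero := zeroM M
  zero_add := pa_zero_add
  add_zero := pa_add_zero
  nsmul := @nsmulRec M ⟨zeroM M⟩ ⟨addM⟩
  add_comm := pa_add_comm
  mul := mulM
  left_distrib := pa_mul_add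
  right_distrib x y z := by
    change mulM (addM x y) z = addM (mulM x z) (mulM y z)
    simp only [pa_mul_comm _ z, pa_mul_add]
  zero_mul := pa_zero_mul
  mul_zero := pa_mul_zero
  mul_assoc := pa_mul_assoc
  one := oneM M
  one_mul x := (pa_mul_comm _ _).trans (pa_mul_one x)
  mul_one := pa_mul_one
  mul_comm := pa_mul_comm

instance : IsCancelAdd M where
  add_left_cancel x _ _ e :=
    pa_add_right_cancel (z := x) ((pa_add_comm _ _).trans (e.trans (pa_add_comm _ _)))
  add_right_cancel _ _ _ e := pa_add_right_cancel e

theorem eq_zero_or_succ (x : M) : x = 0 ∨ ∃ y, x = y + 1 := pa_eq_zero_or_succ x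

theorem succ_ne_zero (x : M) : x + 1 ≠ 0 := pa_succ_ne_zero x

theorem eq_zero_of_add_eq_zero {x y : M} (e : x + y = 0) : x = 0 := by
  obtain rfl | ⟨z, rfl⟩ := eq_zero_or_succ y
  · simpa using e
  · rw [← add_assoc] at e
    exact (succ_ne_zero _ e).elim

open Classical in
/-- The order of a model of Peano arithmetic. -/
noncomputable instance paLinearOrder : LinearOrder M where
  le := leM
  lt := ltM
  le_refl x := Or.inr rfl
  le_trans x y z hxy hyz := by
    obtain ⟨u, rfl⟩ := pa_le_iff.1 hxy
    obtain ⟨w, rfl⟩ := pa_le_iff.1 hyz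
    exact pa_le_iff.2 ⟨_, pa_add_assoc _ _ _⟩
  le_antisymm x y hxy hyx := by
    obtain ⟨u, rfl⟩ := pa_le_iff.1 hxy
    obtain ⟨w, hw⟩ := pa_le_iff.1 hyx
    change x = x + u + w at hw
    rw [add_assoc, left_eq_add] at hw
    change x = x + u
    rw [eq_zero_of_add_eq_zero hw, add_zero]
  le_total := pa_le_total
  lt_iff_le_not_ge x y := by
    constructor
    · intro hxy
      refine ⟨Or.inl hxy, fun hyx => ?_⟩
      obtain ⟨u, rfl⟩ := pa_lt_iff.1 hxy
      obtain ⟨w, hw⟩ := pa_le_iff.1 hyx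
      change x = x + (u + 1) + w at hw
      rw [add_assoc, left_eq_add] at hw
      exact succ_ne_zero _ (eq_zero_of_add_eq_zero hw)
    · rintro ⟨hxy | rfl, hyx⟩
      · exact hxy
      · exact (hyx (Or.inr rfl)).elim
  toDecidableLE := Classical.decRel _

theorem lt_iff_exists_succ {x y : M} : x < y ↔ ∃ z, y = x + (z + 1) := pa_lt_iff

instance : CanonicallyOrderedAdd M where
  exists_add_of_le hxy := pa_le_iff.1 hxy
  le_add_self _ y := pa_le_iff.2 ⟨y, pa_add_comm _ _⟩
  le_self_add _ y := pa_le_iff.2 ⟨y, rfl⟩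

instance : IsOrderedAddMonoid M where
  add_le_add_left x y hxy z := by
    obtain ⟨u, rfl⟩ := exists_add_of_le hxy
    exact le_iff_exists_add.2 ⟨u, by ring⟩

instance : IsStrictOrderedRing M where
  le_of_add_le_add_left x y z e := by
    obtain ⟨u, hu⟩ := exists_add_of_le e
    rw [add_assoc] at hu
    exact le_iff_exists_add.2 ⟨u, add_left_cancel hu⟩
  zero_le_one := zero_le
  exists_pair_ne := ⟨0 + 1, 0, succ_ne_zero 0⟩
  mul_lt_mul_of_pos_left x hx y z hyz := by
    obtain ⟨u, rfl⟩ := lt_iff_exists_succ.1 hx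
    obtain ⟨w, rfl⟩ := lt_iff_exists_succ.1 hyz
    exact lt_iff_exists_succ.2 ⟨u * w + w + u, by ring⟩
  mul_lt_mul_of_pos_right x hx y z hyz := by
    obtain ⟨u, rfl⟩ := lt_iff_exists_succ.1 hx
    obtain ⟨w, rfl⟩ := lt_iff_exists_succ.1 hyz
    exact lt_iff_exists_succ.2 ⟨u * w + w + u, by ring⟩

theorem lt_succ_iff {x y : M} : x < y + 1 ↔ x ≤ y := pa_lt_succ x y

theorem succ_le_iff {x y : M} : x + 1 ≤ y ↔ x < y := by
  rw [← lt_succ_iff, add_lt_add_iff_right]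

theorem induction {P : M → Prop} (hP : Dp fun v : Fin 1 → M => P (v 0)) (h0 : P 0)
    (hs : ∀ x, P x → P (x + 1)) (x : M) : P x :=
  pa_induction hP h0 hs x

variable {α : Type} [Finite α] {s t : (α → M) → M}

theorem Dp.lt (hs : Df s) (ht : Df t) : Dp fun v => s v < t v := Dp.ltM hs ht

theorem Dp.le (hs : Df s) (ht : Df t) : Dp fun v => s v ≤ t v :=
  (Dp.lt hs ht).or (Dp.eq hs ht)

theorem Df.add (hs : Df s) (ht : Df t) : Df fun v => s v + t v := hs.addM ht

theorem Df.mul (hs : Df s) (ht : Df t) : Df fun v => s v * t v := hs.mulM ht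

end Peano

/-- Definability of formulas written in terms of the ordered semiring operations. -/
theorem definable {M : Type*} [arith.Structure M] {α : Type} {P : (α → M) → Prop}
    (hP : Dp P := by
      repeat' first
      | with_reducible apply Dp.and
      | with_reducible apply Dp.or
      | with_reducible apply Dp.not
      | with_reducible apply Dp.iff
      | with_reducible apply Dp.ex
      | with_reducible apply Dp.all
      | with_reducible apply Dp.imp
      | with_reducible apply Dp.eq
      | with_reducible apply Dp.le
      | with_reducible apply Df.add
      | with_reducible apply Df.mul
      | with_reducible apply Df.var
      | with_reducible apply Df.const
      | with_reducible apply Dp.lt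
      | with_reducible apply_assumption) : Dp P :=
  hP

section Coding

variable {M : Type*} [arith.Structure M] [Fact (IsPAModel M)]

theorem exists_common_multiple (n : M) :
    ∃ m : M, 0 < m ∧ ∀ i, 0 < i → i ≤ n → ∃ t, m = i * t := by
  refine induction (P := fun n => ∃ m : M, 0 < m ∧ ∀ i, 0 < i → i ≤ n → ∃ t, m = i * t)
    definable ?_ ?_ n
  · exact ⟨1, zero_lt_one, fun i hi h => (hi.not_ge h).elim⟩
  · rintro n ⟨m, hm, h⟩
    refine ⟨m * (n + 1), mul_pos hm (lt_succ_iff.2 zero_le), fun i hi hin => ?_⟩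
    rcases hin.lt_or_eq with hin | rfl
    · obtain ⟨t, rfl⟩ := h i hi (lt_succ_iff.1 hin)
      exact ⟨t * (n + 1), by ring⟩
    · exact ⟨m, by ring⟩

/-- `u` is invertible modulo `A`. -/
def InvMod (u A : M) : Prop := ∃ x y, u * x = A * y + 1

theorem InvMod.mul {u v A : M} (hu : InvMod u A) (hv : InvMod v A) : InvMod (u * v) A := by
  obtain ⟨x, y, h⟩ := hu
  obtain ⟨x', y', h'⟩ := hv
  refine ⟨x * x', A * y * y' + y + y', ?_⟩
  calc u * v * (x * x') = (u * x) * (v * x') := by ring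
    _ = _ := by rw [h, h']; ring

theorem invMod_one (A : M) : InvMod 1 A := ⟨1, 0, by ring⟩

theorem InvMod.symm {u A : M} (hA : 0 < A) (h : InvMod u A) : InvMod A u := by
  obtain ⟨x, y, h⟩ := h
  obtain hz | ⟨z, hz⟩ := eq_zero_or_succ (A * y)
  · obtain ⟨b, rfl⟩ := lt_iff_exists_succ.1 hA
    exact ⟨1, x * b, by
      rw [hz, zero_add] at h
      rw [← mul_assoc, h]; ring⟩
  · refine ⟨y * (A * y), z * x, ?_⟩
    calc A * (y * (A * y)) = (A * y) * (A * y) := by ring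
      _ = z * (A * y + 1) + 1 := by rw [hz]; ring
      _ = _ := by rw [← h]; ring

theorem InvMod.not_dvd {A t : M} (hA : 1 < A) (h : InvMod (A * t) A) : False := by
  obtain ⟨x, y, h⟩ := h
  rw [mul_assoc] at h
  rcases le_or_gt (t * x) y with hy | hy
  · have := mul_le_mul_right hy A
    rw [h] at this
    exact absurd (lt_succ_iff.2 le_rfl) this.not_gt
  · have := mul_le_mul_right (succ_le_iff.2 hy) A
    rw [h, mul_add, mul_one, add_le_add_iff_left] at this
    exact this.not_gt hA

/-- The moduli used to code finite sets. -/
def modulus (m y : M) : M := m * (y + 1) + 1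

theorem modulus_pos (m y : M) : 0 < modulus m y := lt_succ_iff.2 zero_le

theorem one_lt_modulus {m : M} (hm : 0 < m) (y : M) : 1 < modulus m y := by
  rw [modulus, lt_add_iff_pos_left]
  exact mul_pos hm (lt_succ_iff.2 zero_le)

theorem invMod_modulus_add {m i δ e : M} (hm : 0 < m) (hδ : m = δ * e) :
    InvMod (modulus m (i + δ)) (modulus m i) := by
  obtain ⟨q, hq⟩ := (eq_zero_or_succ (m * (i + 1))).resolve_left
    (mul_pos hm (lt_succ_iff.2 zero_le)).ne'
  refine ⟨e * (i + 1) * (i + 1), e * (i + 1) * (i + 1) + q, ?_⟩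
  have e1 : modulus m (i + δ) = modulus m i + m * δ := by simp only [modulus]; ring
  have e2 : modulus m i = q + 1 + 1 := by rw [modulus, hq]
  calc modulus m (i + δ) * (e * (i + 1) * (i + 1))
      = modulus m i * (e * (i + 1) * (i + 1)) + m * (i + 1) * ((δ * e) * (i + 1)) := by
        rw [e1]; ring
    _ = _ := by rw [← hδ, hq, e2]; ring

theorem invMod_modulus {m n i j : M} (hm : 0 < m)
    (h : ∀ i, 0 < i → i ≤ n → ∃ t, m = i * t) (hi : i < n) (hj : j < n) (hij : i ≠ j) :
    InvMod (modulus m j) (modulus m i) := by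
  have key : ∀ {i j}, j < n → i < j → InvMod (modulus m j) (modulus m i) := by
    intro i j hj hij
    obtain ⟨δ, rfl⟩ := lt_iff_exists_succ.1 hij
    obtain ⟨e, he⟩ := h (δ + 1) (lt_succ_iff.2 zero_le) (le_add_self.trans hj.le)
    exact invMod_modulus_add hm he
  rcases hij.lt_or_gt with hij | hij
  · exact key hj hij
  · exact (key hi hij).symm (modulus_pos _ _)

/-- `y` belongs to the finite set coded by `m` and `w`. -/
def MemCode (m w y : M) : Prop := ∃ t, w = modulus m y * t

theorem Df.modulus {α : Type} [Finite α] {s t : (α → M) → M} (hs : Df s) (ht : Df t) :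
    Df fun v => modulus (s v) (t v) :=
  ((hs.mul (ht.add (Df.const 1))).add (Df.const 1))

theorem Dp.invMod {α : Type} [Finite α] {s t : (α → M) → M} (hs : Df s) (ht : Df t) :
    Dp fun v => InvMod (s v) (t v) := by
  unfold InvMod
  exact Dp.comp₂ (R := fun a b => ∃ x y, a * x = b * y + 1) definable hs ht

theorem Dp.memCode {α : Type} [Finite α] {r s t : (α → M) → M} (hr : Df r) (hs : Df s)
    (ht : Df t) : Dp fun v => MemCode (r v) (s v) (t v) :=
  Dp.comp (P := fun v : Fin 3 → M => MemCode (v 0) (v 1) (v 2)) (t := ![r, s, t])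
    (Dp.ex (Dp.eq (Df.var _) ((Df.modulus (Df.var _) (Df.var _)).mul (Df.var _))))
    fun j => by fin_cases j <;> assumption

theorem exists_set_code {D : M → Prop} (hD : Dp fun v : Fin 1 → M => D (v 0)) (n : M) :
    ∃ m w, ∀ y < n, (MemCode m w y ↔ D y) := by
  classical
  obtain ⟨m, hm, h⟩ := exists_common_multiple n
  have hD' : ∀ {α : Type} [Finite α] {s : (α → M) → M}, Df s → Dp fun v => D (s v) :=
    fun hs => hD.comp₁ hs
  have key : ∀ k, ∃ w, ∀ y, y < n → (y < k ∧ D y → MemCode m w y) ∧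
      (¬(y < k ∧ D y) → InvMod w (modulus m y)) := by
    refine induction ?_ ?_ ?_
    · have h1 := @Dp.memCode M _ _
      have h2 := @Dp.invMod M _ _
      have h3 := @Df.modulus M _ _
      exact definable
    · exact ⟨1, fun y _ => ⟨fun h => (not_lt_zero h.1).elim, fun _ => invMod_one _⟩⟩
    · rintro k ⟨w, hw⟩
      by_cases hk : k < n ∧ D k
      · refine ⟨w * modulus m k, fun y hy => ?_⟩
        rcases eq_or_ne y k with rfl | hyk
        · exact ⟨fun _ => ⟨w, mul_comm _ _⟩, fun h => (h ⟨lt_succ_iff.2 le_rfl, hk.2⟩).elim⟩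
        · have e : y < k + 1 ↔ y < k := by rw [lt_succ_iff, lt_iff_le_and_ne, and_iff_left hyk]
          rw [e]
          refine ⟨fun h => ?_, fun h' => ((hw y hy).2 h').mul (invMod_modulus hm h hy hk.1 hyk)⟩
          obtain ⟨t, rfl⟩ := (hw y hy).1 h
          exact ⟨t * modulus m k, by ring⟩
      · refine ⟨w, fun y hy => ?_⟩
        have e : y < k + 1 ∧ D y ↔ y < k ∧ D y := by
          rw [lt_succ_iff, le_iff_lt_or_eq]
          constructor
          · rintro ⟨h | rfl, h'⟩
            · exact ⟨h, h'⟩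
            · exact (hk ⟨hy, h'⟩).elim
          · exact fun h => ⟨Or.inl h.1, h.2⟩
        rw [e]
        exact hw y hy
  obtain ⟨w, hw⟩ := key n
  refine ⟨m, w, fun y hy => ⟨fun hy' => ?_, fun h => (hw y hy).1 ⟨hy, h⟩⟩⟩
  by_contra hDy
  obtain ⟨t, rfl⟩ := hy'
  exact ((hw y hy).2 fun h => hDy h.2).not_dvd (one_lt_modulus hm y)

/-- A pairing function. -/
def pr (y c : M) : M := (y + c) * (y + c) + c

theorem pr_inj {y c y' c' : M} (h : pr y c = pr y' c') : y = y' ∧ c = c' := by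
  have key : ∀ {y c y' c' : M}, y + c < y' + c' → pr y c < pr y' c' := by
    intro y c y' c' h
    obtain ⟨z, hz⟩ := lt_iff_exists_succ.1 h
    rw [pr, pr, hz, lt_iff_exists_succ]
    exact ⟨(y + c) * (z + z + 1) + y + z * z + z + z + c', by ring⟩
  have hs : y + c = y' + c' := by
    rcases lt_trichotomy (y + c) (y' + c') with h' | h' | h'
    · exact absurd h (key h').ne
    · exact h'
    · exact absurd h (key h').ne'
  rw [pr, pr, hs, add_right_inj] at h
  subst h
  exact ⟨add_right_cancel hs, rfl⟩

theorem pr_lt_pr {y c c' : M} (h : c < c') : pr y c < pr y c' := by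
  rw [pr, pr]
  gcongr

/-- `c` is the value at `y` of the finite function coded by `m` and `w`. -/
def IsVal (m w y c : M) : Prop :=
  MemCode m w (pr y c) ∧ ∀ c', c' < c → ¬ MemCode m w (pr y c')

theorem IsVal.unique {m w y c c' : M} (h : IsVal m w y c) (h' : IsVal m w y c') : c = c' := by
  rcases lt_trichotomy c c' with hc | hc | hc
  · exact (h'.2 c hc h.1).elim
  · exact hc
  · exact (h.2 c' hc h'.1).elim

theorem Df.pr {α : Type} [Finite α] {s t : (α → M) → M} (hs : Df s) (ht : Df t) :
    Df fun v => pr (s v) (t v) :=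
  (((hs.add ht).mul (hs.add ht)).add ht)

theorem Dp.isVal {α : Type} [Finite α] {r s t u : (α → M) → M} (hr : Df r) (hs : Df s)
    (ht : Df t) (hu : Df u) : Dp fun v => IsVal (r v) (s v) (t v) (u v) := by
  refine Dp.comp (P := fun v : Fin 4 → M => IsVal (v 0) (v 1) (v 2) (v 3)) (t := ![r, s, t, u])
    ?_ fun j => by fin_cases j <;> assumption
  have h1 := @Dp.memCode M _ _
  have h2 := @Df.pr M _ _
  unfold IsVal
  exact definable

theorem exists_fun_code {R : M → M → Prop} (hR : Dp fun v : Fin 2 → M => R (v 0) (v 1)) (n : M)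
    (hf : ∀ y c c', R y c → R y c' → c = c') :
    ∃ m w, ∀ y < n, ∀ c, R y c → IsVal m w y c := by
  have hR' : ∀ {α : Type} [Finite α] {s t : (α → M) → M}, Df s → Df t →
    Dp fun v => R (s v) (t v) := fun hs ht => hR.comp₂ hs ht
  have h2 := @Df.pr M _ _
  have hb : ∃ b, ∀ y, y < n → ∀ c, R y c → pr y c < b := by
    refine induction (P := fun n => ∃ b, ∀ y, y < n → ∀ c, R y c → pr y c < b) ?_ ?_ ?_ n
    · exact definable
    · exact ⟨0, fun y hy => (not_lt_zero hy).elim⟩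
    · rintro n ⟨b, hb⟩
      by_cases h : ∃ c, R n c
      · obtain ⟨c, hc⟩ := h
        refine ⟨b + (pr n c + 1), fun y hy c' hc' => ?_⟩
        rcases (lt_succ_iff.1 hy).lt_or_eq with hy | rfl
        · exact (hb y hy c' hc').trans_le le_self_add
        · rw [hf _ _ _ hc' hc]
          exact (lt_succ_iff.2 le_rfl).trans_le le_add_self
      · refine ⟨b, fun y hy c' hc' => ?_⟩
        rcases (lt_succ_iff.1 hy).lt_or_eq with hy | rfl
        · exact hb y hy c' hc'
        · exact (h ⟨_, hc'⟩).elim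
  obtain ⟨b, hb⟩ := hb
  obtain ⟨m, w, hw⟩ := exists_set_code (D := fun z => ∃ y c, z = pr y c ∧ R y c) definable b
  refine ⟨m, w, fun y hy c hc => ⟨(hw _ (hb y hy c hc)).2 ⟨y, c, rfl, hc⟩, fun c' hc' h => ?_⟩⟩
  obtain ⟨y1, c1, e, h1⟩ := (hw _ ((pr_lt_pr hc').trans (hb y hy c hc))).1 h
  obtain ⟨rfl, rfl⟩ := pr_inj e
  exact hc'.ne (hf _ _ _ h1 hc)

end Coding

section Counting

variable {M : Type*} [arith.Structure M] [Fact (IsPAModel M)]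

/-- `c` counts the elements of `D` below `x`. -/
def IsCount (D : M → Prop) (x c : M) : Prop :=
  ∃ m w, IsVal m w 0 0 ∧ (∀ y, y < x → ∃ e, IsVal m w y e ∧
    ((D y ∧ IsVal m w (y + 1) (e + 1)) ∨ (¬ D y ∧ IsVal m w (y + 1) e))) ∧ IsVal m w x c

theorem IsCount.unique {D : M → Prop} {x c c' : M} (h : IsCount D x c) (h' : IsCount D x c') :
    c = c' := by
  obtain ⟨m, w, h0, hs, hx⟩ := h
  obtain ⟨m', w', h0', hs', hx'⟩ := h'
  have h1 := @Dp.isVal M _ _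
  have key : ∀ y, y ≤ x → ∃ e, IsVal m w y e ∧ IsVal m' w' y e := by
    refine induction definable ?_ ?_
    · exact fun _ => ⟨0, h0, h0'⟩
    · intro y ih hy
      have hy := succ_le_iff.1 hy
      obtain ⟨e, he, he'⟩ := ih hy.le
      obtain ⟨e1, he1, hd⟩ := hs y hy
      obtain ⟨e2, he2, hd'⟩ := hs' y hy
      obtain rfl := he1.unique he
      obtain rfl := he2.unique he'
      rcases hd with hd | hd <;> rcases hd' with hd' | hd'
      · exact ⟨_, hd.2, hd'.2⟩
      · exact (hd'.1 hd.1).elim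
      · exact (hd.1 hd'.1).elim
      · exact ⟨_, hd.2, hd'.2⟩
  obtain ⟨e, he, he'⟩ := key x le_rfl
  rw [hx.unique he, hx'.unique he']

theorem isCount_zero (D : M → Prop) : IsCount D 0 0 := by
  obtain ⟨m, w, h⟩ := exists_fun_code (R := fun _ c : M => c = 0) definable 1
    fun y c c' h h' => h.trans h'.symm
  have := h 0 zero_lt_one 0 rfl
  exact ⟨m, w, this, fun y hy => (not_lt_zero hy).elim, this⟩

theorem IsCount.succ {D : M → Prop} {x c c' : M} (h : IsCount D x c)
    (hc' : (D x ∧ c' = c + 1) ∨ (¬ D x ∧ c' = c)) : IsCount D (x + 1) c' := by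
  obtain ⟨m, w, h0, hs, hx⟩ := h
  have h1 := @Dp.isVal M _ _
  obtain ⟨m', w', h'⟩ := exists_fun_code
    (R := fun y e => (y ≤ x ∧ IsVal m w y e) ∨ (y = x + 1 ∧ e = c')) definable (x + 1 + 1) (by
      have hlt : ¬ x + 1 ≤ x := (lt_succ_iff.2 le_rfl).not_ge
      rintro y e e' (⟨hy, he⟩ | ⟨rfl, he⟩) (⟨hy', he'⟩ | ⟨hy', he'⟩)
      · exact he.unique he'
      · exact (hlt (hy' ▸ hy)).elim
      · exact (hlt hy').elim
      · exact he.trans he'.symm)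
  have hold : ∀ y e, y ≤ x → IsVal m w y e → IsVal m' w' y e := fun y e hy he =>
    h' y (lt_succ_iff.2 (hy.trans le_self_add)) e (Or.inl ⟨hy, he⟩)
  have hnew : IsVal m' w' (x + 1) c' := h' (x + 1) (lt_succ_iff.2 le_rfl) c' (Or.inr ⟨rfl, rfl⟩)
  refine ⟨m', w', hold _ _ zero_le h0, fun y hy => ?_, hnew⟩
  rcases (lt_succ_iff.1 hy).lt_or_eq with hy | rfl
  · obtain ⟨e, he, hd⟩ := hs y hy
    have hy' := succ_le_iff.2 hy
    exact ⟨e, hold _ _ hy.le he, hd.imp (fun hd => ⟨hd.1, hold _ _ hy' hd.2⟩)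
      fun hd => ⟨hd.1, hold _ _ hy' hd.2⟩⟩
  · refine ⟨c, hold _ _ le_rfl hx, hc'.imp (fun h => ⟨h.1, ?_⟩) fun h => ⟨h.1, ?_⟩⟩
    · rwa [← h.2]
    · rwa [← h.2]

theorem Dp.isCount {α : Type} [Finite α] {D : (α → M) → M → Prop}
    (hD : Dp fun w : Option α → M => D (fun i => w (some i)) (w none))
    {s t : (α → M) → M} (hs : Df s) (ht : Df t) : Dp fun v => IsCount (D v) (s v) (t v) := by
  have h1 := @Dp.isVal M _ _
  have h2 : ∀ {β : Type} [Finite β] (e : α → β) {r : (β → M) → M}, Df r →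
      Dp fun v => D (fun i => v (e i)) (r v) := by
    intro β _ e r hr
    exact Dp.comp (t := fun (o : Option α) (v : β → M) => o.elim (r v) fun i => v (e i)) hD
      fun o => by
        cases o with
        | none => exact hr
        | some i => exact Df.var _
  have h3 : Dp fun w : Option (Option α) → M =>
      IsCount (D fun i => w (some (some i))) (w (some none)) (w none) := by
    unfold IsCount
    exact definable
  exact Dp.comp (t := fun (o : Option (Option α)) (v : α → M) =>
      o.elim (t v) fun o => o.elim (s v) fun i => v i) h3 fun o => by
    match o with
    | none => exact ht
    | some none => exact hs
    | some (some i) => exact Df.var _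

theorem Ds.exists_isCount {D : M → Prop} (hD : Ds D) (x : M) : ∃ c, IsCount D x c := by
  have h1 : ∀ {α : Type} [Finite α] {s t : (α → M) → M}, Df s → Df t →
      Dp fun v => IsCount D (s v) (t v) := fun hs ht =>
    Dp.isCount (D := fun _ => D) (hD.comp (Df.var none)) hs ht
  refine induction (P := fun x => ∃ c, IsCount D x c) definable ⟨0, isCount_zero D⟩ ?_ x
  rintro x ⟨c, hc⟩
  by_cases hx : D x
  · exact ⟨c + 1, hc.succ (Or.inl ⟨hx, rfl⟩)⟩
  · exact ⟨c, hc.succ (Or.inr ⟨hx, rfl⟩)⟩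

open Classical in
/-- The number of elements of `D` below `x`. -/
noncomputable def cnt (D : M → Prop) (x : M) : M :=
  if h : ∃ c, IsCount D x c then h.choose else 0

theorem Ds.isCount_iff {D : M → Prop} (hD : Ds D) {x c : M} : IsCount D x c ↔ cnt D x = c := by
  have h := hD.exists_isCount x
  have hc : IsCount D x (cnt D x) := by
    rw [cnt, dif_pos h]
    exact h.choose_spec
  exact ⟨fun h' => hc.unique h', fun h' => h' ▸ hc⟩

theorem Df.cnt {α : Type} [Finite α] {D : (α → M) → M → Prop}
    (hD : Dp fun w : Option α → M => D (fun i => w (some i)) (w none))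
    {s : (α → M) → M} (hs : Df s) : Df fun v => cnt (D v) (s v) := by
  rw [df_iff]
  have hD' : Dp fun w : Option (Option α) → M => D (fun i => w (some (some i))) (w none) :=
    hD.relabel fun o => o.elim none fun i => some (some i)
  refine Dp.congr (Dp.isCount (D := fun (w : Option α → M) => D fun i => w (some i)) hD'
    (hs.relabel some) (Df.var none)) fun w => (Ds.isCount_iff ?_).symm
  exact Dp.comp (t := fun (o : Option α) (v : Fin 1 → M) => o.elim (v 0) fun i => w (some i)) hD
    fun o => by
      cases o with
      | none => exact Df.var 0
      | some i => exact Df.const _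

section Lemmas

variable {D E S : M → Prop}

theorem cnt_df (hD : Ds D) {α : Type} [Finite α] {s : (α → M) → M} (hs : Df s) :
    Df fun v => cnt D (s v) :=
  Df.cnt (D := fun _ => D) (hD.comp (Df.var none)) hs

theorem cnt_zero (D : M → Prop) (hD : Ds D) : cnt D 0 = 0 := hD.isCount_iff.1 (isCount_zero D)

theorem cnt_succ_of_mem (hD : Ds D) {x : M} (hx : D x) : cnt D (x + 1) = cnt D x + 1 :=
  hD.isCount_iff.1 ((hD.isCount_iff.2 rfl).succ (Or.inl ⟨hx, rfl⟩))

theorem cnt_succ_of_not_mem (hD : Ds D) {x : M} (hx : ¬ D x) : cnt D (x + 1) = cnt D x :=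
  hD.isCount_iff.1 ((hD.isCount_iff.2 rfl).succ (Or.inr ⟨hx, rfl⟩))

theorem cnt_le_succ (hD : Ds D) (x : M) : cnt D x ≤ cnt D (x + 1) := by
  by_cases hx : D x
  · rw [cnt_succ_of_mem hD hx]
    exact le_self_add
  · rw [cnt_succ_of_not_mem hD hx]

theorem cnt_succ_le (hD : Ds D) (x : M) : cnt D (x + 1) ≤ cnt D x + 1 := by
  by_cases hx : D x
  · rw [cnt_succ_of_mem hD hx]
  · rw [cnt_succ_of_not_mem hD hx]
    exact le_self_add

theorem cnt_monotone (hD : Ds D) {x y : M} (h : x ≤ y) : cnt D x ≤ cnt D y := by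
  obtain ⟨z, rfl⟩ := exists_add_of_le h
  have h1 := @cnt_df M _ _ _ hD
  refine induction (P := fun z => cnt D x ≤ cnt D (x + z)) definable ?_ ?_ z
  · rw [add_zero]
  · intro z hz
    rw [← add_assoc]
    exact hz.trans (cnt_le_succ hD _)

theorem cnt_mono (hD : Ds D) (hE : Ds E) (h : ∀ y, D y → E y) (x : M) : cnt D x ≤ cnt E x := by
  have h1 := @cnt_df M _ _ _ hD
  have h2 := @cnt_df M _ _ _ hE
  refine induction (P := fun x => cnt D x ≤ cnt E x) definable ?_ ?_ x
  · rw [cnt_zero D hD, cnt_zero E hE]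
  · intro x hx
    by_cases hx' : D x
    · rw [cnt_succ_of_mem hD hx', cnt_succ_of_mem hE (h x hx')]
      gcongr
    · rw [cnt_succ_of_not_mem hD hx']
      exact hx.trans (cnt_le_succ hE x)

theorem cnt_add_one_le (hD : Ds D) (hE : Ds E) (h : ∀ y, D y → E y) {z x : M}
    (hz : E z) (hz' : ¬ D z) (hx : z < x) : cnt D x + 1 ≤ cnt E x := by
  have h1 := @cnt_df M _ _ _ hD
  have h2 := @cnt_df M _ _ _ hE
  refine induction (P := fun x => z < x → cnt D x + 1 ≤ cnt E x) definable ?_ ?_ x hx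
  · exact fun h => (not_lt_zero h).elim
  · intro x ih hx
    rcases (lt_succ_iff.1 hx).lt_or_eq with hx | rfl
    · by_cases hx' : D x
      · rw [cnt_succ_of_mem hD hx', cnt_succ_of_mem hE (h x hx')]
        gcongr
        exact ih hx
      · rw [cnt_succ_of_not_mem hD hx']
        exact (ih hx).trans (cnt_le_succ hE x)
    · rw [cnt_succ_of_not_mem hD hz', cnt_succ_of_mem hE hz]
      gcongr
      exact cnt_mono hD hE h z

theorem cnt_le_add (hD : Ds D) (hE : Ds E) (hS : Ds S) (h : ∀ y, S y → D y ∨ E y) (x : M) :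
    cnt S x ≤ cnt D x + cnt E x := by
  have h1 := @cnt_df M _ _ _ hD
  have h2 := @cnt_df M _ _ _ hE
  have h3 := @cnt_df M _ _ _ hS
  refine induction (P := fun x => cnt S x ≤ cnt D x + cnt E x) definable ?_ ?_ x
  · rw [cnt_zero S hS]
    exact zero_le
  · intro x hx
    by_cases hx' : S x
    · refine (cnt_succ_le hS x).trans ((add_le_add_left hx 1).trans ?_)
      rcases h x hx' with hx' | hx'
      · rw [cnt_succ_of_mem hD hx', add_right_comm]
        exact add_le_add_right (cnt_le_succ hE x) _
      · rw [cnt_succ_of_mem hE hx', add_assoc]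
        exact add_le_add_left (cnt_le_succ hD x) _
    · rw [cnt_succ_of_not_mem hS hx']
      exact hx.trans (add_le_add (cnt_le_succ hD x) (cnt_le_succ hE x))

end Lemmas

theorem le_cnt_of_injOn {S : M → Prop} (hS : Ds S) {f : M → M} (hf : DefinableFun₁ f) {c B : M}
    (hinj : Set.InjOn f {x | x < c}) (hmem : ∀ x < c, S (f x)) (hB : ∀ x < c, f x < B) :
    c ≤ cnt S B := by
  have hf' := @Df.app M _ (hf := hf)
  have hfam : ∀ {α : Type} [Finite α] {s : (α → M) → M}, Df s →
      Df fun v => cnt (fun y => ∃ i, i < s v ∧ f i = y) B := by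
    intro α _ s hs
    have hs' := @Df.relabel (h := hs)
    exact Df.cnt (D := fun v y => ∃ i, i < s v ∧ f i = y) definable (Df.const B)
  have hDs : ∀ j, Ds fun y => ∃ i, i < j ∧ f i = y := fun j => definable
  have key : ∀ j, j ≤ c → j ≤ cnt (fun y => ∃ i, i < j ∧ f i = y) B := by
    refine induction definable (fun _ => zero_le) fun j ih hj => ?_
    have hj := succ_le_iff.1 hj
    refine (add_le_add_left (ih hj.le) 1).trans
      (cnt_add_one_le (hDs _) (hDs _) ?_ ⟨j, lt_succ_iff.2 le_rfl, rfl⟩ ?_ (hB j hj))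
    · rintro y ⟨i, hi, rfl⟩
      exact ⟨i, hi.trans (lt_succ_iff.2 le_rfl), rfl⟩
    · rintro ⟨i, hi, e⟩
      exact hi.ne (hinj (hi.trans hj) hj e)
  refine (key c le_rfl).trans (cnt_mono (hDs c) hS ?_ B)
  rintro y ⟨i, hi, rfl⟩
  exact hmem i hi

theorem internalCard_cnt {S : M → Prop} (hS : Ds S) {B : M} (hB : ∀ y, S y → y < B) :
    InternalCard {y | S y} (cnt S B) := by
  classical
  have h1 := @cnt_df M _ _ _ hS
  have h2 := @Ds.comp M (hD := hS)
  have hex : ∀ j, j < cnt S B → ∃ y, S y ∧ cnt S y = j := by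
    refine induction (P := fun B => ∀ j, j < cnt S B → ∃ y, S y ∧ cnt S y = j) definable ?_ ?_ B
    · intro j hj
      rw [cnt_zero S hS] at hj
      exact (not_lt_zero hj).elim
    · intro x ih j hj
      by_cases hx : S x
      · rw [cnt_succ_of_mem hS hx, lt_succ_iff] at hj
        rcases hj.lt_or_eq with hj | rfl
        · exact ih j hj
        · exact ⟨x, hx, rfl⟩
      · rw [cnt_succ_of_not_mem hS hx] at hj
        exact ih j hj
  have hlt : ∀ {y z}, S y → y < z → cnt S y < cnt S z := fun {y z} hy hyz => by
    rw [← succ_le_iff, ← cnt_succ_of_mem hS hy]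
    exact cnt_monotone hS (succ_le_iff.2 hyz)
  have huniq : ∀ {y z}, S y → S z → cnt S y = cnt S z → y = z := fun {y z} hy hz e => by
    rcases lt_trichotomy y z with h | h | h
    · exact absurd e (hlt hy h).ne
    · exact h
    · exact absurd e (hlt hz h).ne'
  let f : M → M := fun j => if h : ∃ y, S y ∧ cnt S y = j then h.choose else 0
  have hf : ∀ j y, f j = y ↔ (S y ∧ cnt S y = j) ∨ (¬ (∃ y, S y ∧ cnt S y = j) ∧ y = 0) := by
    intro j y
    by_cases h : ∃ y, S y ∧ cnt S y = j
    · have hs := h.choose_spec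
      have e : f j = h.choose := dif_pos h
      rw [e]
      constructor
      · rintro rfl
        exact Or.inl hs
      · rintro (h' | h')
        · exact huniq hs.1 h'.1 (hs.2.trans h'.2.symm)
        · exact (h'.1 h).elim
    · have e : f j = 0 := dif_neg h
      rw [e]
      constructor
      · rintro rfl
        exact Or.inr ⟨h, rfl⟩
      · rintro (h' | h')
        · exact (h ⟨y, h'⟩).elim
        · exact h'.2.symm
  have hf' : ∀ j, j < cnt S B → S (f j) ∧ cnt S (f j) = j := fun j hj =>
    ((hf j _).1 rfl).resolve_right fun h => h.1 (hex j hj)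
  refine ⟨f, ?_, fun j hj => (hf' j hj).1, fun j hj j' hj' e => ?_, fun y hy => ?_⟩
  · have : Dp fun v : Fin 2 → M => f (v 0) = v 1 := by
      simp only [hf]
      exact definable
    exact dp_iff.1 this
  · rw [← (hf' j hj).2, ← (hf' j' hj').2, e]
  · exact ⟨cnt S y, hlt hy (hB y hy), (hf _ _).2 (Or.inl ⟨hy, rfl⟩)⟩

end Counting

section StandardSystem

variable {M : Type*} [arith.Structure M] [Fact (IsPAModel M)]

theorem numeral_eq_cast (n : ℕ) : numeral M n = (n : M) := by
  induction n with
  | zero => exact Nat.cast_zero.symm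
  | succ n ih =>
    rw [Nat.cast_succ, ← ih]
    rfl

theorem isStd_iff {x : M} : IsStd x ↔ ∃ n : ℕ, x = n := by
  simp only [IsStd, numeral_eq_cast]

theorem isStd_of_le {x : M} {n : ℕ} (h : x ≤ n) : IsStd x := by
  induction n with
  | zero => exact isStd_iff.2 ⟨0, le_antisymm (by simpa using h) (by simp)⟩
  | succ n ih =>
    rcases h.lt_or_eq with h | h
    · rw [Nat.cast_succ, lt_succ_iff] at h
      exact ih h
    · exact isStd_iff.2 ⟨_, h⟩

theorem cast_lt_of_not_isStd {a : M} (ha : ¬ IsStd a) (n : ℕ) : (n : M) < a :=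
  lt_of_not_ge fun h => ha (isStd_of_le h)

/-- `f` is the base `2` exponential up to `a`. -/
structure IsExpUpTo (f : M → M) (a : M) : Prop where
  definable : DefinableFun₁ f
  zero : f 0 = 1
  succ : ∀ z < a, f (z + 1) = f z + f z

/-- The `i`-th digit of `y` is `1`, relative to the exponential `f`. -/
def Digit (f : M → M) (y i : M) : Prop :=
  ∃ u w, y = u * f (i + 1) + (f i + w) ∧ w < f i

namespace IsExpUpTo

variable {f : M → M} {a : M}

theorem app (hf : IsExpUpTo f a) {α : Type} [Finite α] {s : (α → M) → M} (hs : Df s) :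
    Df fun v => f (s v) :=
  Df.app hf.definable hs

theorem dp_digit (hf : IsExpUpTo f a) {α : Type} [Finite α] {s t : (α → M) → M}
    (hs : Df s) (ht : Df t) :
    Dp fun v => Digit f (s v) (t v) := by
  refine Dp.comp₂ (R := Digit f) ?_ hs ht
  have h1 := @hf.app
  unfold Digit
  exact Arith.definable

theorem cast (hf : IsExpUpTo f a) (ha : ¬ IsStd a) (n : ℕ) : f n = ((2 ^ n : ℕ) : M) := by
  induction n with
  | zero => simpa using hf.zero
  | succ n ih =>
    rw [Nat.cast_succ, hf.succ _ (cast_lt_of_not_isStd ha n), ih, pow_succ]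
    push_cast
    ring

theorem digit_iff (hf : IsExpUpTo f a) (ha : ¬ IsStd a) (y : M) (i : ℕ) :
    Digit f y i ↔ digitB y i := by
  rw [Digit, ← Nat.cast_succ, hf.cast ha, hf.cast ha, digitB]
  simp only [numeral_eq_cast]
  rfl

theorem lt_apply (hf : IsExpUpTo f a) {z : M} (hz : z ≤ a) : z < f z := by
  have h1 := @hf.app
  refine induction (P := fun z => z ≤ a → z < f z) Arith.definable ?_ ?_ z hz
  · rw [hf.zero]
    exact fun _ => zero_lt_one
  · intro z ih hz
    have hz := succ_le_iff.1 hz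
    rw [hf.succ z hz]
    have := ih hz.le
    exact add_lt_add_of_lt_of_le this
      (by simpa using succ_le_iff.2 (zero_le.trans_lt this))

theorem exists_eq_mul (hf : IsExpUpTo f a) {i j : M} (h : i + j ≤ a) :
    ∃ t, f (i + j) = t * f i := by
  have h1 := @hf.app
  refine induction (P := fun j => i + j ≤ a → ∃ t, f (i + j) = t * f i) Arith.definable ?_ ?_ j h
  · exact fun _ => ⟨1, by rw [add_zero, one_mul]⟩
  · intro j ih hj
    rw [← add_assoc, succ_le_iff] at hj
    obtain ⟨t, ht⟩ := ih hj.le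
    exact ⟨t + t, by rw [← add_assoc, hf.succ _ hj, ht, add_mul]⟩

theorem exists_code (hf : IsExpUpTo f a) {D : M → Prop} (hD : Ds D) {n : M} (hn : n ≤ a) :
    ∃ y, y < f n ∧ ∀ i, i < n → ∃ u r, y = u * f (i + 1) + r ∧ r < f (i + 1) ∧
      (D i ↔ f i ≤ r) := by
  have h1 := @hf.app
  have h2 := @Ds.comp M (hD := hD)
  refine induction (P := fun n => n ≤ a → ∃ y, y < f n ∧ ∀ i, i < n →
    ∃ u r, y = u * f (i + 1) + r ∧ r < f (i + 1) ∧ (D i ↔ f i ≤ r)) Arith.definable ?_ ?_ n hn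
  · exact fun _ => ⟨0, by rw [hf.zero]; exact zero_lt_one, fun i hi => (not_lt_zero hi).elim⟩
  · intro n ih hn
    have hn' := succ_le_iff.1 hn
    obtain ⟨y, hy, h⟩ := ih hn'.le
    have hs := hf.succ n hn'
    by_cases hDn : D n
    · refine ⟨y + f n, by rw [hs]; gcongr, fun i hi => ?_⟩
      rcases (lt_succ_iff.1 hi).lt_or_eq with hi | rfl
      · obtain ⟨u, r, rfl, hr, hDi⟩ := h i hi
        obtain ⟨j, rfl⟩ := exists_add_of_le (succ_le_iff.2 hi)
        obtain ⟨t, ht⟩ := hf.exists_eq_mul hn'.le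
        exact ⟨u + t, r, by rw [ht]; ring, hr, hDi⟩
      · exact ⟨0, y + f i, by ring, by rw [hs]; gcongr, by simp [hDn]⟩
    · have hlt : y < f (n + 1) := by
        rw [hs]
        exact hy.trans_le le_self_add
      refine ⟨y, hlt, fun i hi => ?_⟩
      rcases (lt_succ_iff.1 hi).lt_or_eq with hi | rfl
      · exact h i hi
      · exact ⟨0, y, by ring, hlt, by simp [hDn, hy]⟩

theorem remainder_unique {u u' A r r' : M} (h : u * A + r = u' * A + r') (hr : r < A)
    (hr' : r' < A) : r = r' := by
  have key : ∀ {u u' r r' : M}, u * A + r = u' * A + r' → r < A → u' ≤ u := by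
    intro u u' r r' h hr
    by_contra hu
    obtain ⟨z, rfl⟩ := lt_iff_exists_succ.1 (not_le.1 hu)
    have e : r = A + (z * A + r') := by
      refine add_left_cancel (a := u * A) (h.trans ?_)
      ring
    rw [e] at hr
    exact hr.not_ge le_self_add
  obtain rfl := le_antisymm (key h.symm hr') (key h hr)
  exact add_left_cancel h

theorem mem_SSy (hf : IsExpUpTo f a) (ha : ¬ IsStd a) {D : M → Prop} (hD : Ds D) :
    {i : ℕ | D i} ∈ SSy M := by
  obtain ⟨y, -, h⟩ := hf.exists_code hD le_rfl
  refine ⟨y + f a, fun hstd => ?_, fun i => ?_⟩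
  · obtain ⟨n, hn⟩ := isStd_iff.1 hstd
    exact ha (isStd_of_le (n := n) (((hf.lt_apply le_rfl).le.trans le_add_self).trans_eq hn))
  · rw [← hf.digit_iff ha, Set.mem_ofPred_eq]
    have hi := cast_lt_of_not_isStd ha i
    obtain ⟨u, r, rfl, hr, hDi⟩ := h i hi
    obtain ⟨j, hj⟩ := exists_add_of_le (succ_le_iff.2 hi)
    obtain ⟨t, ht⟩ := hf.exists_eq_mul hj.ge
    rw [← hj] at ht
    have e : u * f (i + 1) + r + f a = (u + t) * f (i + 1) + r := by rw [ht]; ring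
    have hs := hf.succ _ hi
    rw [hDi, e]
    constructor
    · intro hle
      obtain ⟨w, rfl⟩ := exists_add_of_le hle
      exact ⟨u + t, w, rfl, by rwa [hs, add_lt_add_iff_left] at hr⟩
    · rintro ⟨u', w, h', hw⟩
      rw [remainder_unique h' hr (by rw [hs]; gcongr)]
      exact le_self_add

end IsExpUpTo

end StandardSystem

section Conditions

variable {N : Type*} [arith.Structure N]

theorem dp_realizesAll {n : ℕ} {fm : Set (CFormula N n)} (hfin : fm.Finite) :
    Dp fun b : (Fin n → Bool) → N => RealizesAll fm b := by
  have := hfin.to_subtype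
  exact (Dp.forall_finite fun φ : fm => dp_realize φ.1).congr fun b => by simp [RealizesAll]

theorem df_tupleCode (d : N) (n : ℕ) : Df fun b : (Fin n → Bool) → N => tupleCode d b := by
  unfold tupleCode
  induction List.finRange (2 ^ n) with
  | nil => exact Df.const _
  | cons j l ih => exact ((Df.var _).mulM (Df.const _)).addM ih

/-- The largeness requirement on conditions. -/
def IsLarge (d : N) {n : ℕ} (fm : Set (CFormula N n)) : Prop :=
  ∃ (u v : ℕ) (c : N), 0 < u ∧ 0 < v ∧ InternalCard (realizationCodes d fm) c ∧
    ltM (mulM (numeral N u) (powStd d (2 ^ n))) (mulM (numeral N v) c)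

/-- Codes of realizations of `fm` satisfying `Q`. -/
def CodesOf (d : N) {n : ℕ} (fm : Set (CFormula N n)) (Q : ((Fin n → Bool) → N) → Prop)
    (e : N) : Prop :=
  ∃ b : (Fin n → Bool) → N, (RealizesAll fm b ∧ e = tupleCode d b) ∧ Q b

theorem dp_codesOf {d : N} {n : ℕ} {fm : Set (CFormula N n)} (hfin : fm.Finite) {α : Type}
    [Finite α] {Q : (α → N) → ((Fin n → Bool) → N) → Prop}
    (hQ : Dp fun w : α ⊕ (Fin n → Bool) → N =>
      Q (fun i => w (Sum.inl i)) (fun σ => w (Sum.inr σ))) {s : (α → N) → N} (hs : Df s) :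
    Dp fun v => CodesOf d fm (Q v) (s v) :=
  Dp.exBlock ((((dp_realizesAll hfin).relabel _).and
    (Dp.eq (hs.relabel _) ((df_tupleCode d n).relabel _))).and hQ)

variable [Fact (IsPAModel N)]

theorem IsLarge.exists_realizesAll {d : N} {n : ℕ} {fm : Set (CFormula N n)}
    (h : IsLarge d fm) : ∃ b, RealizesAll fm b := by
  obtain ⟨u, v, c, -, -, ⟨f, -, hf⟩, hlt⟩ := h
  have hc : (0 : N) < c := by
    refine pos_iff_ne_zero.2 ?_
    rintro rfl
    have : numeral N u * powStd d (2 ^ n) < numeral N v * 0 := hlt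
    rw [mul_zero] at this
    exact not_lt_zero this
  obtain ⟨b, hb, -⟩ := hf.mapsTo hc
  exact ⟨b, hb⟩

theorem exists_bound_of_definable {f : N → N} (hf : DefinableFun₁ f) (c : N) :
    ∃ B, ∀ x, x < c → f x < B := by
  have h1 := @Df.app N _ (hf := hf)
  refine induction (P := fun c => ∃ B, ∀ x, x < c → f x < B) definable ?_ ?_ c
  · exact ⟨0, fun x hx => (not_lt_zero hx).elim⟩
  · rintro c ⟨B, hB⟩
    refine ⟨B + (f c + 1), fun x hx => ?_⟩
    rcases (lt_succ_iff.1 hx).lt_or_eq with hx | rfl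
    · exact (hB x hx).trans_le le_self_add
    · exact (lt_succ_iff.2 le_rfl).trans_le le_add_self

theorem exists_isLarge_insert {a d : N} {f : N → N} (ha : ¬ IsStd a) (hf : IsExpUpTo f a)
    {g : Set ℕ} (hg : g ∉ SSy N) {n k : ℕ} {F : (Fin k → N) → N} (hF : DefinableFun F)
    (σs : Fin k → Fin n → Bool) {fm : Set (CFormula N n)} (hfin : fm.Finite)
    (hl : IsLarge d fm) :
    ∃ φ : CFormula N n, IsLarge d (insert φ fm) ∧ ∃ i : ℕ, ∀ b, φ.Realize b →
      ¬ (i ∈ g ↔ digitB (F fun j => b (σs j)) i) := by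
  obtain ⟨u, v, c, hu, hv, ⟨h, hh, hbij⟩, hlt⟩ := hl
  obtain ⟨B, hB⟩ := exists_bound_of_definable hh c
  have hFdf : ∀ {β : Type} [Finite β] (e : (Fin n → Bool) → β),
      Df fun v : β → N => F fun j => v (e (σs j)) := fun e => hF.df.relabel fun j => e (σs j)
  let S : N → Prop := CodesOf d fm fun _ => True
  let T : N → N → Prop := fun i => CodesOf d fm fun b => Digit f (F fun j => b (σs j)) i
  let T' : N → N → Prop := fun i => CodesOf d fm fun b => ¬ Digit f (F fun j => b (σs j)) i
  have hScodes : ∀ e, S e ↔ e ∈ realizationCodes d fm := fun e => by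
    simp only [S, CodesOf, and_true]
    rfl
  have hSB : ∀ e, S e → e < B := fun e he => by
    obtain ⟨x, hx, rfl⟩ := hbij.surjOn ((hScodes e).1 he)
    exact hB x hx
  have hS : Ds S := dp_codesOf hfin (Q := fun _ _ => True) (Dp.const _) (Df.var _)
  have hT : ∀ {α : Type} [Finite α] {s t : (α → N) → N}, Df s → Df t → Dp fun v => T (s v) (t v) :=
    fun {α} _ {s t} hs ht => dp_codesOf hfin
      (Q := fun v b => Digit f (F fun j => b (σs j)) (s v))
      (hf.dp_digit (hFdf _) (hs.relabel _)) ht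
  have hT' : ∀ {α : Type} [Finite α] {s t : (α → N) → N}, Df s → Df t →
      Dp fun v => T' (s v) (t v) :=
    fun {α} _ {s t} hs ht => dp_codesOf hfin
      (Q := fun v b => ¬ Digit f (F fun j => b (σs j)) (s v))
      (hf.dp_digit (hFdf _) (hs.relabel _)).not ht
  have hTs : ∀ i, Ds (T i) := fun i => hT (Df.const i) (Df.var 0)
  have hTs' : ∀ i, Ds (T' i) := fun i => hT' (Df.const i) (Df.var 0)
  have hc : c ≤ cnt S B := le_cnt_of_injOn hS hh hbij.injOn
    (fun x hx => (hScodes _).2 (hbij.mapsTo hx)) hB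
  have hadd : ∀ i, cnt S B ≤ cnt (T i) B + cnt (T' i) B := fun i =>
    cnt_le_add (hTs i) (hTs' i) hS (fun e ⟨b, hb, _⟩ =>
      (em (Digit f (F fun j => b (σs j)) i)).imp (fun h => ⟨b, hb, h⟩) fun h => ⟨b, hb, h⟩) B
  have finish : ∀ {Q : ((Fin n → Bool) → N) → Prop}, Dp Q →
      cnt S B ≤ cnt (CodesOf d fm Q) B + cnt (CodesOf d fm Q) B →
      ∃ φ : CFormula N n, IsLarge d (insert φ fm) ∧ ∀ b, φ.Realize b → Q b := by
    intro Q hQ hle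
    obtain ⟨φ, hφ⟩ := hQ.exists_formula
    refine ⟨φ, ⟨u, v + v, cnt (CodesOf d fm Q) B, hu, by omega, ?_, ?_⟩, fun b => (hφ b).1⟩
    · have e : realizationCodes d (insert φ fm) = {e | CodesOf d fm Q e} := by
        ext e
        simp only [realizationCodes, RealizesAll, CodesOf, Set.mem_ofPred_eq, Set.forall_mem_insert,
          hφ]
        exact exists_congr fun b => by tauto
      rw [e]
      refine internalCard_cnt (dp_codesOf hfin (Q := fun _ => Q) (hQ.relabel _) (Df.var _)) ?_
      rintro e ⟨b, hb, -⟩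
      exact hSB e ⟨b, hb, trivial⟩
    · have hlt' : numeral N u * powStd d (2 ^ n) < numeral N v * c := hlt
      change numeral N u * powStd d (2 ^ n) < numeral N (v + v) * _
      refine hlt'.trans_le ?_
      rw [numeral_eq_cast, numeral_eq_cast, Nat.cast_add, add_mul, ← mul_add]
      exact mul_le_mul_right (hc.trans hle) _
  by_cases h1 : ∃ i : ℕ, i ∈ g ∧ cnt S B ≤ cnt (T' i) B + cnt (T' i) B
  · obtain ⟨i, hi, hle⟩ := h1
    obtain ⟨φ, hφ, h⟩ := finish (hf.dp_digit (hFdf fun σ => σ) (Df.const (i : N))).not hle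
    refine ⟨φ, hφ, i, fun b hb hiff => h b hb ?_⟩
    exact (hf.digit_iff ha _ i).2 (hiff.1 hi)
  by_cases h2 : ∃ i : ℕ, i ∉ g ∧ cnt S B ≤ cnt (T i) B + cnt (T i) B
  · obtain ⟨i, hi, hle⟩ := h2
    obtain ⟨φ, hφ, h⟩ := finish (hf.dp_digit (hFdf fun σ => σ) (Df.const (i : N))) hle
    refine ⟨φ, hφ, i, fun b hb hiff => hi (hiff.2 ?_)⟩
    exact (hf.digit_iff ha _ i).1 (h b hb)
  push Not at h1 h2
  refine (hg ?_).elim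
  have hD : Ds fun i => cnt (T' i) B + cnt (T' i) B < cnt S B := by
    have := Df.cnt (D := fun v : Fin 1 → N => T' (v 0)) (hT' (Df.var _) (Df.var _)) (Df.const B)
    exact Dp.lt (this.add this) (Df.const _)
  have e : g = {i : ℕ | cnt (T' i) B + cnt (T' i) B < cnt S B} := by
    ext i
    refine ⟨h1 i, fun hi => ?_⟩
    by_contra hig
    have := h2 i hig
    have h3 := add_le_add (hadd i) (hadd i)
    rw [add_add_add_comm] at h3
    exact h3.not_gt (add_lt_add this hi)
  rw [e]
  exact hf.mem_SSy ha hD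

end Conditions

theorem reduct_self {N : Type*} [arith.Structure N] {n : ℕ} (h : n ≤ n) (φ : CFormula N n) :
    reduct h φ = φ :=
  (BoundedFormula.relabel_sumInl φ).trans (BoundedFormula.castLE_rfl _ φ)

end Arith

open Arith in
/-- For every `g ∉ SSy(N)`, every `N`-definable `F : N^k → N` and every condition `p`
there is a condition `q ≤ p` with `n_q = n_p` such that every `(σ₁, …, σ_k) ∈ (2^{n_q})^k`
corresponds to an `i < ω` with `q ⊢ g(i) ≠ (F(x_{σ₁}, …, x_{σ_k}))_i`. -/
theorem statement_10 (N : Type*) [arith.Structure N] (hN : NonstandardModel N)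
    (hNc : Countable N) (a d : N) (ha : ¬ IsStd a) (hd : IsPow2 a d)
    (g : Set ℕ) (hg : g ∉ SSy N)
    (p : Condition N d) (k : ℕ) (F : (Fin k → N) → N) (hF : DefinableFun F) :
    ∃ q : Condition N d, CondLE q p ∧ q.n = p.n ∧
      ∀ σs : Fin k → Fin q.n → Bool,
        ∃ i : ℕ, ∀ b : (Fin q.n → Bool) → N, RealizesAll q.fmls b →
          ¬ ((i ∈ g) ↔ digitB (F fun j => b (σs j)) i) := by
  have : Fact (IsPAModel N) := ⟨hN.1⟩
  obtain ⟨f, hfd, h0, hs, -⟩ := hd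
  have hf : IsExpUpTo f a := ⟨hfd, h0, hs⟩
  have step : ∀ T : Finset (Fin k → Fin p.n → Bool), ∃ fm : Set (CFormula N p.n),
      p.fmls ⊆ fm ∧ fm.Finite ∧ IsLarge d fm ∧ ∀ σs ∈ T, ∃ i : ℕ, ∀ b, RealizesAll fm b →
        ¬ ((i ∈ g) ↔ digitB (F fun j => b (σs j)) i) := by
    intro T
    induction T using Finset.induction_on with
    | empty => exact ⟨p.fmls, subset_rfl, p.finite, p.large, by simp⟩
    | insert σs T _ ih =>
      obtain ⟨fm, hsub, hfin, hl, h⟩ := ih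
      obtain ⟨φ, hφ, i, hi⟩ := exists_isLarge_insert ha hf hg hF σs hfin hl
      refine ⟨insert φ fm, hsub.trans (Set.subset_insert _ _), hfin.insert _, hφ, fun τs hτs => ?_⟩
      rcases Finset.mem_insert.1 hτs with rfl | hτs
      · exact ⟨i, fun b hb => hi b (hb φ (Set.mem_insert _ _))⟩
      · obtain ⟨j, hj⟩ := h τs hτs
        exact ⟨j, fun b hb => hj b fun ψ hψ => hb ψ (Set.mem_insert_of_mem _ hψ)⟩
  obtain ⟨fm, hsub, hfin, hl, h⟩ := step Finset.univ
  refine ⟨⟨p.n, fm, hfin, hl.exists_realizesAll, fun b hb => p.bounded b fun ψ hψ => hb ψ (hsub hψ),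
    hl⟩, ⟨le_rfl, fun ψ hψ => hsub ?_⟩, rfl, fun σs => h σs (Finset.mem_univ σs)⟩
  rwa [reduct_self] at hψ
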